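/- For the action of Q̂₈ = {±id, ±(i;0), ±j', ±k'} on T = ℍ/𝔞: every point of T whose stabilizer is nontrivial is a 2-torsion point; among the sixteen 2-torsion points, exactly twelve (namely the fixed points of (i;0), j' and k') have stabilizer of order 4, and the remaining four 2-torsion points {1000, 0100, 0010, 1110} form a single Q̂₈-orbit of size 4, each having stabilizer {id, −id} of order 2. In particular the quotient set T/Q̂₈ contains exactly 6 orbits of points with stabilizer of order 4 and exactly 1 orbit of points with stabilizer of order 2. -/

import Mathlib

/- STATEMENT 9: For the action of Q̂₈ = {±id, ±(i;0), ±j', ±k'} on T = ℍ/𝔞: every point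
with nontrivial stabilizer is 2-torsion; among the sixteen 2-torsion points exactly twelve
(the fixed points of (i;0), j', k') have stabilizer of order 4, and the remaining four
{1000, 0100, 0010, 1110} form a single Q̂₈-orbit of size 4, each with stabilizer
{id, −id} of order 2.  In particular T/Q̂₈ has exactly 6 orbits of points with stabilizer
of order 4 and exactly 1 orbit of points with stabilizer of order 2. -/

open scoped Quaternion

noncomputable def qi : ℍ[ℝ] := ⟨0, 1, 0, 0⟩
noncomputable def qj : ℍ[ℝ] := ⟨0, 0, 1, 0⟩
noncomputable def qk : ℍ[ℝ] := ⟨0, 0, 0, 1⟩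
noncomputable def qt : ℍ[ℝ] := (1 + qi + qj + qk) / 2
noncomputable def qα : ℍ[ℝ] := (1 + qi) / 2

/-- The Hurwitz order `𝔞 = ℤ·1 + ℤ·i + ℤ·j + ℤ·t` as an additive subgroup of `ℍ`. -/
noncomputable def hurwitz : AddSubgroup ℍ[ℝ] := AddSubgroup.closure {1, qi, qj, qt}

/-- The real torus `T = ℍ/𝔞`. -/
noncomputable abbrev T := ℍ[ℝ] ⧸ hurwitz

/-- The class map `ℍ → T = ℍ/𝔞`. -/
noncomputable def π : ℍ[ℝ] → T := QuotientAddGroup.mk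

theorem half_eq (q : ℍ[ℝ]) : q / 2 = (2⁻¹ : ℝ) • q := by
  have h : (2 : ℍ[ℝ]) = ((2 : ℝ) : ℍ[ℝ]) := by norm_cast
  rw [div_eq_mul_inv, h, ← Quaternion.coe_inv, Quaternion.mul_coe_eq_smul]

/-- Quaternion with given coordinates. -/
def mkq (a b c d : ℝ) : ℍ[ℝ] := ⟨a, b, c, d⟩

@[simp] theorem mkq_re (a b c d : ℝ) : (mkq a b c d).re = a := rfl
@[simp] theorem qi_re : qi.re = 0 := rfl
@[simp] theorem qj_re : qj.re = 0 := rfl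
@[simp] theorem qk_re : qk.re = 0 := rfl
@[simp] theorem mkq_imI (a b c d : ℝ) : (mkq a b c d).imI = b := rfl
@[simp] theorem qi_imI : qi.imI = 1 := rfl
@[simp] theorem qj_imI : qj.imI = 0 := rfl
@[simp] theorem qk_imI : qk.imI = 0 := rfl
@[simp] theorem mkq_imJ (a b c d : ℝ) : (mkq a b c d).imJ = c := rfl
@[simp] theorem qi_imJ : qi.imJ = 0 := rfl
@[simp] theorem qj_imJ : qj.imJ = 1 := rfl
@[simp] theorem qk_imJ : qk.imJ = 0 := rfl
@[simp] theorem mkq_imK (a b c d : ℝ) : (mkq a b c d).imK = d := rfl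
@[simp] theorem qi_imK : qi.imK = 0 := rfl
@[simp] theorem qj_imK : qj.imK = 0 := rfl
@[simp] theorem qk_imK : qk.imK = 1 := rfl


/-- Explicit description of membership in the Hurwitz order. -/
theorem mem_hurwitz_iff (q : ℍ[ℝ]) : q ∈ hurwitz ↔ ∃ a b c d : ℤ,
    q = mkq (a + d / 2) (b + d / 2) (c + d / 2) (d / 2) := by
  constructor
  · intro h
    unfold hurwitz at h
    induction h using AddSubgroup.closure_induction with
    | mem x hx =>
      rcases hx with rfl | rfl | rfl | rfl
      · exact ⟨1, 0, 0, 0, by ext <;> simp⟩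
      · exact ⟨0, 1, 0, 0, by ext <;> simp⟩
      · exact ⟨0, 0, 1, 0, by ext <;> simp⟩
      · refine ⟨0, 0, 0, 1, ?_⟩
        have : qt = (2⁻¹ : ℝ) • (1 + qi + qj + qk) := by
          rw [qt, half_eq]
        rw [this]
        ext <;> simp
    | zero => exact ⟨0, 0, 0, 0, by ext <;> simp⟩
    | add x y _ _ hx hy =>
      obtain ⟨a, b, c, d, rfl⟩ := hx
      obtain ⟨a', b', c', d', rfl⟩ := hy
      refine ⟨a + a', b + b', c + c', d + d', ?_⟩
      ext <;> simp <;> ring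
    | neg x _ hx =>
      obtain ⟨a, b, c, d, rfl⟩ := hx
      refine ⟨-a, -b, -c, -d, ?_⟩
      ext <;> simp <;> ring
  · rintro ⟨a, b, c, d, rfl⟩
    have h1 : (1 : ℍ[ℝ]) ∈ hurwitz := AddSubgroup.subset_closure (by simp)
    have h2 : qi ∈ hurwitz := AddSubgroup.subset_closure (by simp)
    have h3 : qj ∈ hurwitz := AddSubgroup.subset_closure (by simp)
    have h4 : qt ∈ hurwitz := AddSubgroup.subset_closure (by simp)
    have := add_mem (add_mem (add_mem (zsmul_mem h1 a) (zsmul_mem h2 b)) (zsmul_mem h3 c))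
      (zsmul_mem h4 d)
    suffices key : mkq (a + d / 2) (b + d / 2) (c + d / 2) (d / 2) =
        a • (1 : ℍ[ℝ]) + b • qi + c • qj + d • qt by
      rw [key]; exact this
    have : qt = (2⁻¹ : ℝ) • (1 + qi + qj + qk) := by
      rw [qt, half_eq]
    rw [this]
    ext <;> simp <;> ring

theorem pi_eq_iff (x y : ℍ[ℝ]) : π x = π y ↔ y - x ∈ hurwitz := by
  unfold π
  rw [QuotientAddGroup.eq, neg_add_eq_sub]

theorem pi_surj (x : T) : ∃ q, π q = x := QuotientAddGroup.mk_surjective x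

theorem pi_neg (x : ℍ[ℝ]) : π (-x) = -π x := rfl
theorem pi_add (x y : ℍ[ℝ]) : π (x + y) = π x + π y := rfl

/-- Half-lattice points with integer coordinates. -/
noncomputable def PZ (a b c d : ℤ) : T :=
  π (mkq (a / 2 + d / 4) (b / 2 + d / 4) (c / 2 + d / 4) (d / 4))

theorem PZ_eq_iff (a b c d a' b' c' d' : ℤ) : PZ a b c d = PZ a' b' c' d' ↔
    ((a : ZMod 2) = a' ∧ (b : ZMod 2) = b' ∧ (c : ZMod 2) = c' ∧ (d : ZMod 2) = d') := by
  unfold PZ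
  rw [pi_eq_iff, mem_hurwitz_iff]
  simp only [ZMod.intCast_eq_intCast_iff_dvd_sub]
  constructor
  · rintro ⟨k, l, m, n, h⟩
    have h0 := congrArg (fun q : ℍ[ℝ] => q.re) h
    have h1 := congrArg (fun q : ℍ[ℝ] => q.imI) h
    have h2 := congrArg (fun q : ℍ[ℝ] => q.imJ) h
    have h3 := congrArg (fun q : ℍ[ℝ] => q.imK) h
    simp at h0 h1 h2 h3
    refine ⟨⟨k, ?_⟩, ⟨l, ?_⟩, ⟨m, ?_⟩, ⟨n, ?_⟩⟩ <;>
    · rify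
      linarith
  · rintro ⟨⟨k, h0⟩, ⟨l, h1⟩, ⟨m, h2⟩, ⟨n, h3⟩⟩
    refine ⟨k, l, m, n, ?_⟩
    rify at h0 h1 h2 h3
    ext <;> simp <;> linarith

/-- The finite model of the `2`-torsion of `T`. -/
abbrev V := ZMod 2 × ZMod 2 × ZMod 2 × ZMod 2

noncomputable def pp (v : V) : T := PZ v.1.val v.2.1.val v.2.2.1.val v.2.2.2.val

theorem PZ_eq_pp (a b c d : ℤ) : PZ a b c d = pp (a, b, c, d) := by
  unfold pp
  rw [PZ_eq_iff]
  simp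

theorem pp_inj : Function.Injective pp := by
  rintro ⟨a, b, c, d⟩ ⟨a', b', c', d'⟩ h
  unfold pp at h
  rw [PZ_eq_iff] at h
  simpa using h

theorem torsion_iff (x : T) : x + x = 0 ↔ ∃ v, pp v = x := by
  obtain ⟨q, rfl⟩ := pi_surj x
  have e0 : (0 : T) = π 0 := rfl
  rw [← pi_add, e0, eq_comm, pi_eq_iff, mem_hurwitz_iff]
  constructor
  · rintro ⟨a, b, c, d, h⟩
    refine ⟨(a, b, c, d), ?_⟩
    rw [← PZ_eq_pp, PZ]
    congr 1
    have h0 := congrArg (fun q : ℍ[ℝ] => q.re) h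
    have h1 := congrArg (fun q : ℍ[ℝ] => q.imI) h
    have h2 := congrArg (fun q : ℍ[ℝ] => q.imJ) h
    have h3 := congrArg (fun q : ℍ[ℝ] => q.imK) h
    simp at h0 h1 h2 h3
    ext <;> simp <;> linarith
  · rintro ⟨⟨a, b, c, d⟩, h⟩
    unfold pp PZ at h
    rw [pi_eq_iff, mem_hurwitz_iff] at h
    obtain ⟨k, l, m, n, h⟩ := h
    have h0 := congrArg (fun q : ℍ[ℝ] => q.re) h
    have h1 := congrArg (fun q : ℍ[ℝ] => q.imI) h
    have h2 := congrArg (fun q : ℍ[ℝ] => q.imJ) h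
    have h3 := congrArg (fun q : ℍ[ℝ] => q.imK) h
    simp at h0 h1 h2 h3
    refine ⟨2 * k + a.val, 2 * l + b.val, 2 * m + c.val, 2 * n + d.val, ?_⟩
    ext <;> simp <;> linarith

/-- The action of the four classes modulo sign on the torsion points. -/
def sg (m : Fin 4) (v : V) : V :=
  match m with
  | 0 => v
  | 1 => (v.2.1 + v.2.2.1 + v.2.2.2, v.1 + v.2.2.1, v.2.2.1 + v.2.2.2, v.2.2.2)
  | 2 => (v.2.1 + v.2.2.1 + 1, v.2.1 + v.2.2.2 + 1, v.1 + v.2.1 + v.2.2.2, v.2.2.2)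
  | 3 => (v.1 + v.2.2.2 + 1, v.1 + v.2.2.1 + v.2.2.2 + 1, v.1 + v.2.1, v.2.2.2)

theorem qα_eq : qα = mkq (1 / 2) (1 / 2) 0 0 := by
  rw [qα, half_eq]
  ext <;> simp

theorem act_i (a b c d : ℤ) : qi * mkq (a / 2 + d / 4) (b / 2 + d / 4) (c / 2 + d / 4) (d / 4) =
    mkq (((-b - c - d : ℤ) : ℝ) / 2 + ((d + 2 * c : ℤ) : ℝ) / 4)
      (((a - c : ℤ) : ℝ) / 2 + ((d + 2 * c : ℤ) : ℝ) / 4)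
      (((-c - d : ℤ) : ℝ) / 2 + ((d + 2 * c : ℤ) : ℝ) / 4)
      (((d + 2 * c : ℤ) : ℝ) / 4) := by
  ext <;> simp <;> ring

theorem act_j (a b c d : ℤ) :
    qj * mkq (a / 2 + d / 4) (b / 2 + d / 4) (c / 2 + d / 4) (d / 4) + qα =
    mkq (((b - c + 1 : ℤ) : ℝ) / 2 + ((-2 * b - d : ℤ) : ℝ) / 4)
      (((b + d + 1 : ℤ) : ℝ) / 2 + ((-2 * b - d : ℤ) : ℝ) / 4)
      (((a + b + d : ℤ) : ℝ) / 2 + ((-2 * b - d : ℤ) : ℝ) / 4)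
      (((-2 * b - d : ℤ) : ℝ) / 4) := by
  rw [qα_eq]
  ext <;> simp <;> ring

theorem act_k (a b c d : ℤ) :
    qk * mkq (a / 2 + d / 4) (b / 2 + d / 4) (c / 2 + d / 4) (d / 4) + qα =
    mkq (((-a - d + 1 : ℤ) : ℝ) / 2 + ((2 * a + d : ℤ) : ℝ) / 4)
      (((-a - c - d + 1 : ℤ) : ℝ) / 2 + ((2 * a + d : ℤ) : ℝ) / 4)
      (((-a + b : ℤ) : ℝ) / 2 + ((2 * a + d : ℤ) : ℝ) / 4)
      (((2 * a + d : ℤ) : ℝ) / 4) := by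
  rw [qα_eq]
  ext <;> simp <;> ring

theorem two_z : (2 : ZMod 2) = 0 := rfl

theorem zneg (a : ZMod 2) : -a = a := by revert a; decide

theorem neg_pp (v : V) : -pp v = pp v := by
  have := (torsion_iff (pp v)).2 ⟨v, rfl⟩
  exact neg_eq_of_add_eq_zero_left this

theorem fi_pp (f : Equiv.Perm T) (hf : ∀ x : ℍ[ℝ], f (π x) = π (qi * x)) (v : V) :
    f (pp v) = pp (sg 1 v) := by
  unfold pp PZ
  rw [hf, act_i]
  change PZ _ _ _ _ = pp _
  rw [PZ_eq_pp]
  simp [sg, two_z, sub_eq_add_neg]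

theorem fj_pp (f : Equiv.Perm T) (hf : ∀ x : ℍ[ℝ], f (π x) = π (qj * x + qα)) (v : V) :
    f (pp v) = pp (sg 2 v) := by
  unfold pp PZ
  rw [hf, act_j]
  change PZ _ _ _ _ = pp _
  rw [PZ_eq_pp]
  simp [sg, two_z, sub_eq_add_neg]

theorem fk_pp (f : Equiv.Perm T) (hf : ∀ x : ℍ[ℝ], f (π x) = π (qk * x + qα)) (v : V) :
    f (pp v) = pp (sg 3 v) := by
  unfold pp PZ
  rw [hf, act_k]
  change PZ _ _ _ _ = pp _
  rw [PZ_eq_pp]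
  simp [sg, two_z, sub_eq_add_neg]

theorem fi_sq (f : Equiv.Perm T) (hf : ∀ x : ℍ[ℝ], f (π x) = π (qi * x)) (x : T) :
    f (f x) = -x := by
  obtain ⟨q, rfl⟩ := pi_surj x
  rw [hf, hf, ← pi_neg]
  congr 1
  ext <;> simp

theorem fj_sq (f : Equiv.Perm T) (hf : ∀ x : ℍ[ℝ], f (π x) = π (qj * x + qα)) (x : T) :
    f (f x) = -x := by
  obtain ⟨q, rfl⟩ := pi_surj x
  rw [hf, hf, ← pi_neg, pi_eq_iff, mem_hurwitz_iff, qα_eq]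
  refine ⟨-1, -1, -1, 1, ?_⟩
  ext <;> simp <;> ring

theorem fk_sq (f : Equiv.Perm T) (hf : ∀ x : ℍ[ℝ], f (π x) = π (qk * x + qα)) (x : T) :
    f (f x) = -x := by
  obtain ⟨q, rfl⟩ := pi_surj x
  rw [hf, hf, ← pi_neg, pi_eq_iff, mem_hurwitz_iff, qα_eq]
  refine ⟨0, 0, -0, -1, ?_⟩
  ext <;> simp <;> ring

theorem tors_of_neg {x : T} (h : -x = x) : x + x = 0 := by
  nth_rewrite 1 [← h]; simp

theorem neg_ne : ∃ x : T, -x ≠ x := by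
  refine ⟨π (mkq 0 0 0 (1 / 8)), fun h => ?_⟩
  rw [← pi_neg, pi_eq_iff, mem_hurwitz_iff] at h
  obtain ⟨a, b, c, d, h⟩ := h
  have h3 := congrArg (fun q : ℍ[ℝ] => q.imK) h
  simp at h3
  have : (1 : ℝ) = 2 * d := by linarith
  have : (1 : ℤ) = 2 * d := by exact_mod_cast this
  omega

/-- Stabilizer size of a `2`-torsion point in the finite model. -/
def stc (v : V) : ℕ := (Finset.univ.filter fun sm : Bool × Fin 4 => sg sm.2 v = v).card

/-- Orbit of a `2`-torsion point in the finite model. -/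
def orb (v : V) : Finset V := Finset.univ.image fun m => sg m v

/-- The exceptional four points. -/
def F4 : Finset V := {(1, 0, 0, 0), (0, 1, 0, 0), (0, 0, 1, 0), (1, 1, 1, 0)}

theorem F4_image : ({π (1 / 2), π (qi / 2), π (qj / 2), π ((1 + qi + qj) / 2)} : Set T) =
    pp '' (F4 : Set V) := by
  have h1 : π (1 / 2) = pp (1, 0, 0, 0) := by
    have := PZ_eq_pp 1 0 0 0
    simp only [Int.cast_one, Int.cast_zero] at this
    rw [← this, PZ, half_eq]; congr 1; ext <;> simp
  have h2 : π (qi / 2) = pp (0, 1, 0, 0) := by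
    have := PZ_eq_pp 0 1 0 0
    simp only [Int.cast_one, Int.cast_zero] at this
    rw [← this, PZ, half_eq]; congr 1; ext <;> simp
  have h3 : π (qj / 2) = pp (0, 0, 1, 0) := by
    have := PZ_eq_pp 0 0 1 0
    simp only [Int.cast_one, Int.cast_zero] at this
    rw [← this, PZ, half_eq]; congr 1; ext <;> simp
  have h4 : π ((1 + qi + qj) / 2) = pp (1, 1, 1, 0) := by
    have := PZ_eq_pp 1 1 1 0
    simp only [Int.cast_one, Int.cast_zero] at this
    rw [← this, PZ, half_eq]; congr 1; ext <;> simp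
  rw [h1, h2, h3, h4, F4]
  simp [Set.image_insert_eq]

/-- Enumeration of the eight maps. -/
def enum (fi fj fk fneg fnegi fnegj fnegk : Equiv.Perm T) : Bool × Fin 4 → Equiv.Perm T
  | (false, 0) => 1
  | (false, 1) => fi
  | (false, 2) => fj
  | (false, 3) => fk
  | (true, 0) => fneg
  | (true, 1) => fnegi
  | (true, 2) => fnegj
  | (true, 3) => fnegk

theorem sg_sep : ∀ m n : Fin 4, (∀ v, sg m v = sg n v) → m = n := by decide

theorem Qhat8_action_stabilizers_and_orbits
    (fi fj fk fneg fnegi fnegj fnegk : Equiv.Perm T)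
    (hfi : ∀ x : ℍ[ℝ], fi (π x) = π (qi * x))
    (hfj : ∀ x : ℍ[ℝ], fj (π x) = π (qj * x + qα))
    (hfk : ∀ x : ℍ[ℝ], fk (π x) = π (qk * x + qα))
    (hfneg : ∀ x : ℍ[ℝ], fneg (π x) = π (-x))
    (hfnegi : ∀ x : ℍ[ℝ], fnegi (π x) = π (-(qi * x)))
    (hfnegj : ∀ x : ℍ[ℝ], fnegj (π x) = π (-(qj * x + qα)))
    (hfnegk : ∀ x : ℍ[ℝ], fnegk (π x) = π (-(qk * x + qα)))
    (Q : Subgroup (Equiv.Perm T))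
    (hQ : (Q : Set (Equiv.Perm T)) = {1, fneg, fi, fnegi, fj, fnegj, fk, fnegk}) :
    -- every point with nontrivial stabilizer is a 2-torsion point
    (∀ x : T, (∃ g ∈ Q, g ≠ 1 ∧ g x = x) → x + x = 0) ∧
    -- the 2-torsion points with stabilizer of order 4 are exactly the fixed points
    -- of (i;0), j' and k', and there are exactly twelve of them
    ({x : T | x + x = 0 ∧ Nat.card {g : Equiv.Perm T // g ∈ Q ∧ g x = x} = 4} =
      {x : T | fi x = x} ∪ {x : T | fj x = x} ∪ {x : T | fk x = x}) ∧
    Set.ncard ({x : T | fi x = x} ∪ {x : T | fj x = x} ∪ {x : T | fk x = x}) = 12 ∧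
    -- the remaining four 2-torsion points are {1000, 0100, 0010, 1110}
    ({x : T | x + x = 0} \
        ({x : T | fi x = x} ∪ {x : T | fj x = x} ∪ {x : T | fk x = x}) =
      ({π (1 / 2), π (qi / 2), π (qj / 2), π ((1 + qi + qj) / 2)} : Set T)) ∧
    Set.ncard ({π (1 / 2), π (qi / 2), π (qj / 2), π ((1 + qi + qj) / 2)} : Set T) = 4 ∧
    -- these four points form a single Q̂₈-orbit
    (∀ x ∈ ({π (1 / 2), π (qi / 2), π (qj / 2), π ((1 + qi + qj) / 2)} : Set T),
      {y : T | ∃ g ∈ Q, g x = y} =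
        ({π (1 / 2), π (qi / 2), π (qj / 2), π ((1 + qi + qj) / 2)} : Set T)) ∧
    -- each of them has stabilizer {id, −id}, of order 2
    (∀ x ∈ ({π (1 / 2), π (qi / 2), π (qj / 2), π ((1 + qi + qj) / 2)} : Set T),
      {g : Equiv.Perm T | g ∈ Q ∧ g x = x} = {1, fneg} ∧
      Nat.card {g : Equiv.Perm T // g ∈ Q ∧ g x = x} = 2) ∧
    -- exactly 6 orbits of points with stabilizer of order 4
    Set.ncard {s : Set T | ∃ x : T, s = {y : T | ∃ g ∈ Q, g x = y} ∧
      Nat.card {g : Equiv.Perm T // g ∈ Q ∧ g x = x} = 4} = 6 ∧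
    -- exactly 1 orbit of points with stabilizer of order 2
    Set.ncard {s : Set T | ∃ x : T, s = {y : T | ∃ g ∈ Q, g x = y} ∧
      Nat.card {g : Equiv.Perm T // g ∈ Q ∧ g x = x} = 2} = 1 := by
  have hN : ∀ x, fneg x = -x := fun x => by
    obtain ⟨q, rfl⟩ := pi_surj x; rw [hfneg, pi_neg]
  have hNi : ∀ x, fnegi x = -fi x := fun x => by
    obtain ⟨q, rfl⟩ := pi_surj x; rw [hfnegi, hfi, pi_neg]
  have hNj : ∀ x, fnegj x = -fj x := fun x => by
    obtain ⟨q, rfl⟩ := pi_surj x; rw [hfnegj, hfj, pi_neg]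
  have hNk : ∀ x, fnegk x = -fk x := fun x => by
    obtain ⟨q, rfl⟩ := pi_surj x; rw [hfnegk, hfk, pi_neg]
  have hMi : ∀ x, fi (-x) = -fi x := fun x => by
    rw [← fi_sq fi hfi, ← fi_sq fi hfi]
  have hMj : ∀ x, fj (-x) = -fj x := fun x => by
    rw [← fj_sq fj hfj, ← fj_sq fj hfj]
  have hMk : ∀ x, fk (-x) = -fk x := fun x => by
    rw [← fk_sq fk hfk, ← fk_sq fk hfk]
  have ti : ∀ x, fi x = x → x + x = 0 := fun x h => tors_of_neg (by
    have := fi_sq fi hfi x; rw [h, h] at this; exact this.symm)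
  have tj : ∀ x, fj x = x → x + x = 0 := fun x h => tors_of_neg (by
    have := fj_sq fj hfj x; rw [h, h] at this; exact this.symm)
  have tk : ∀ x, fk x = x → x + x = 0 := fun x h => tors_of_neg (by
    have := fk_sq fk hfk x; rw [h, h] at this; exact this.symm)
  have tni : ∀ x, fnegi x = x → x + x = 0 := fun x h => tors_of_neg (by
    rw [hNi] at h
    have h2 : fi x = -x := neg_eq_iff_eq_neg.1 h
    have := fi_sq fi hfi x; rw [h2, hMi, h] at this; exact this.symm)
  have tnj : ∀ x, fnegj x = x → x + x = 0 := fun x h => tors_of_neg (by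
    rw [hNj] at h
    have h2 : fj x = -x := neg_eq_iff_eq_neg.1 h
    have := fj_sq fj hfj x; rw [h2, hMj, h] at this; exact this.symm)
  have tnk : ∀ x, fnegk x = x → x + x = 0 := fun x h => tors_of_neg (by
    rw [hNk] at h
    have h2 : fk x = -x := neg_eq_iff_eq_neg.1 h
    have := fk_sq fk hfk x; rw [h2, hMk, h] at this; exact this.symm)
  have hmem : ∀ g, g ∈ Q ↔ g = 1 ∨ g = fneg ∨ g = fi ∨ g = fnegi ∨ g = fj ∨ g = fnegj ∨
      g = fk ∨ g = fnegk := fun g => by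
    rw [← SetLike.mem_coe, hQ]; rfl
  have part1 : ∀ x : T, (∃ g ∈ Q, g ≠ 1 ∧ g x = x) → x + x = 0 := by
    rintro x ⟨g, hg, hg1, hgx⟩
    rcases (hmem g).1 hg with rfl | rfl | rfl | rfl | rfl | rfl | rfl | rfl
    · exact absurd rfl hg1
    · exact tors_of_neg (by rw [← hN]; exact hgx)
    · exact ti x hgx
    · exact tni x hgx
    · exact tj x hgx
    · exact tnj x hgx
    · exact tk x hgx
    · exact tnk x hgx
  obtain ⟨e, he⟩ : ∃ e, e = enum fi fj fk fneg fnegi fnegj fnegk := ⟨_, rfl⟩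
  have heQ : ∀ g, g ∈ Q ↔ ∃ sm, e sm = g := by
    intro g
    rw [hmem, he]
    constructor
    · rintro (rfl | rfl | rfl | rfl | rfl | rfl | rfl | rfl)
      · exact ⟨(false, 0), rfl⟩
      · exact ⟨(true, 0), rfl⟩
      · exact ⟨(false, 1), rfl⟩
      · exact ⟨(true, 1), rfl⟩
      · exact ⟨(false, 2), rfl⟩
      · exact ⟨(true, 2), rfl⟩
      · exact ⟨(false, 3), rfl⟩
      · exact ⟨(true, 3), rfl⟩
    · rintro ⟨⟨s, m⟩, rfl⟩
      cases s <;> fin_cases m <;> simp [enum]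
  have heneg : ∀ m x, e (true, m) x = -e (false, m) x := by
    intro m x
    rw [he]
    fin_cases m
    · exact hN x
    · exact hNi x
    · exact hNj x
    · exact hNk x
  have hef : ∀ m v, e (false, m) (pp v) = pp (sg m v) := by
    intro m v
    rw [he]
    fin_cases m
    · rfl
    · exact fi_pp fi hfi v
    · exact fj_pp fj hfj v
    · exact fk_pp fk hfk v
  have hep : ∀ sm v, e sm (pp v) = pp (sg sm.2 v) := by
    rintro ⟨s, m⟩ v
    cases s
    · exact hef m v
    · rw [heneg, hef, neg_pp]
  have hne : ∀ m, e (true, m) ≠ e (false, m) := by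
    intro m h
    obtain ⟨x, hx⟩ := neg_ne
    obtain ⟨y, rfl⟩ := (e (false, m)).surjective x
    exact hx (by rw [← heneg, h])
  have heinj : Function.Injective e := by
    rintro ⟨s, m⟩ ⟨s', m'⟩ h
    have hm : m = m' := sg_sep m m' fun v => pp_inj (by
      have := congrArg (fun g : Equiv.Perm T => g (pp v)) h
      simpa only [hep] using this)
    subst hm
    cases s <;> cases s'
    · rfl
    · exact absurd h.symm (hne m)
    · exact absurd h (hne m)
    · rfl
  have hstabset : ∀ v, {g : Equiv.Perm T | g ∈ Q ∧ g (pp v) = pp v} =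
      e '' ((Finset.univ.filter fun sm : Bool × Fin 4 => sg sm.2 v = v : Finset _) : Set _) := by
    intro v
    ext g
    simp only [Set.mem_ofPred_eq, heQ, Set.mem_image, Finset.coe_filter, Finset.mem_univ, true_and]
    constructor
    · rintro ⟨⟨sm, rfl⟩, h⟩
      exact ⟨sm, pp_inj (by rw [← hep, h]), rfl⟩
    · rintro ⟨sm, h, rfl⟩
      exact ⟨⟨sm, rfl⟩, by rw [hep, h]⟩
  have hstab : ∀ v, Nat.card {g : Equiv.Perm T // g ∈ Q ∧ g (pp v) = pp v} = stc v := by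
    intro v
    change Nat.card ({g : Equiv.Perm T | g ∈ Q ∧ g (pp v) = pp v} : Set _) = _
    rw [Nat.card_coe_set_eq, hstabset, Set.ncard_image_of_injective _ heinj,
      Set.ncard_coe_finset, stc]
  have hstab1 : ∀ x, Nat.card {g : Equiv.Perm T // g ∈ Q ∧ g x = x} ≠ 1 → ∃ v, pp v = x := by
    intro x hx
    rw [← torsion_iff]
    by_contra hc
    apply hx
    change Nat.card ({g : Equiv.Perm T | g ∈ Q ∧ g x = x} : Set _) = _
    rw [Nat.card_coe_set_eq, Set.ncard_eq_one]
    refine ⟨1, ?_⟩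
    ext g
    simp only [Set.mem_ofPred_eq, Set.mem_singleton_iff]
    constructor
    · rintro ⟨h1, h2⟩
      by_contra h3
      exact hc (part1 x ⟨g, h1, h3, h2⟩)
    · rintro rfl
      exact ⟨Q.one_mem, rfl⟩
  have horb : ∀ v, {y : T | ∃ g ∈ Q, g (pp v) = y} = pp '' (orb v : Set V) := by
    intro v
    ext y
    simp only [Set.mem_ofPred_eq, heQ, orb, Set.mem_image, Finset.coe_image, Finset.coe_univ,
      Set.image_univ, Set.mem_range]
    constructor
    · rintro ⟨_, ⟨sm, rfl⟩, rfl⟩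
      exact ⟨_, ⟨sm.2, rfl⟩, (hep sm v).symm⟩
    · rintro ⟨_, ⟨m, rfl⟩, rfl⟩
      exact ⟨_, ⟨(false, m), rfl⟩, hef m v⟩
  have hfix : {x : T | fi x = x} ∪ {x : T | fj x = x} ∪ {x : T | fk x = x} =
      pp '' ((Finset.univ.filter fun v : V => sg 1 v = v ∨ sg 2 v = v ∨ sg 3 v = v :
        Finset V) : Set V) := by
    ext x
    simp only [Set.mem_union, Set.mem_ofPred_eq, Set.mem_image, Finset.coe_filter,
      Finset.mem_univ, true_and]
    constructor
    · intro h
      have hx : x + x = 0 := by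
        rcases h with (h | h) | h
        · exact ti x h
        · exact tj x h
        · exact tk x h
      obtain ⟨v, rfl⟩ := (torsion_iff x).1 hx
      refine ⟨v, ?_, rfl⟩
      rw [fi_pp fi hfi, fj_pp fj hfj, fk_pp fk hfk, pp_inj.eq_iff, pp_inj.eq_iff,
        pp_inj.eq_iff, or_assoc] at h
      exact h
    · rintro ⟨v, h, rfl⟩
      rw [fi_pp fi hfi, fj_pp fj hfj, fk_pp fk hfk, pp_inj.eq_iff, pp_inj.eq_iff,
        pp_inj.eq_iff, or_assoc]
      exact h
  have hcount : ∀ n, n ≠ 1 → Set.ncard {s : Set T | ∃ x : T, s = {y : T | ∃ g ∈ Q, g x = y} ∧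
      Nat.card {g : Equiv.Perm T // g ∈ Q ∧ g x = x} = n} =
      ((Finset.univ.filter fun v => stc v = n).image orb).card := by
    intro n hn
    have hinj : Function.Injective (fun F : Finset V => pp '' (F : Set V)) := by
      intro F G h
      exact Finset.coe_injective (pp_inj.image_injective h)
    rw [← Set.ncard_coe_finset, ← Set.ncard_image_of_injective _ hinj]
    congr 1
    ext s
    simp only [Set.mem_ofPred_eq, Set.mem_image, Finset.coe_image, Finset.coe_filter,
      Finset.mem_univ, true_and]
    constructor
    · rintro ⟨x, rfl, h⟩
      obtain ⟨v, rfl⟩ := hstab1 x (by rw [h]; exact hn)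
      exact ⟨_, ⟨v, by rw [← hstab, h], rfl⟩, (horb v).symm⟩
    · rintro ⟨_, ⟨v, h, rfl⟩, rfl⟩
      exact ⟨pp v, (horb v).symm, by rw [hstab, h]⟩
  rw [F4_image, hfix]
  refine ⟨part1, ?_, ?_, ?_, ?_, ?_, ?_, ?_, ?_⟩
  · have key : ∀ v, stc v = 4 ↔ (sg 1 v = v ∨ sg 2 v = v ∨ sg 3 v = v) := by decide
    ext x
    simp only [Set.mem_ofPred_eq, Set.mem_image, Finset.coe_filter, Finset.mem_univ, true_and]
    constructor
    · rintro ⟨h, h4⟩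
      obtain ⟨v, rfl⟩ := (torsion_iff x).1 h
      rw [hstab] at h4
      exact ⟨v, (key v).1 h4, rfl⟩
    · rintro ⟨v, h, rfl⟩
      exact ⟨(torsion_iff _).2 ⟨v, rfl⟩, by rw [hstab]; exact (key v).2 h⟩
  · rw [Set.ncard_image_of_injective _ pp_inj, Set.ncard_coe_finset]
    decide
  · have key : ∀ v, v ∈ F4 ↔ ¬ (sg 1 v = v ∨ sg 2 v = v ∨ sg 3 v = v) := by decide
    have ht : {x : T | x + x = 0} = pp '' Set.univ := by
      ext x; simp [torsion_iff]
    rw [ht, ← Set.image_sdiff pp_inj]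
    congr 1
    ext v
    simp only [Set.mem_sdiff, Set.mem_univ, true_and, Finset.mem_coe, Finset.mem_filter,
      Finset.mem_univ]
    exact (key v).symm
  · rw [Set.ncard_image_of_injective _ pp_inj, Set.ncard_coe_finset]
    decide
  · have key : ∀ v ∈ F4, orb v = F4 := by decide
    rintro _ ⟨v, hv, rfl⟩
    rw [horb, key v hv]
  · have key : ∀ v ∈ F4, (Finset.univ.filter fun sm : Bool × Fin 4 => sg sm.2 v = v) =
        {(false, 0), (true, 0)} := by decide
    rintro _ ⟨v, hv, rfl⟩
    constructor
    · rw [hstabset, key v hv, he]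
      simp [Set.image_insert_eq, enum]
    · rw [hstab, stc, key v hv]
      rfl
  · rw [hcount 4 (by norm_num)]
    decide
  · rw [hcount 2 (by norm_num)]
    decide
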